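/- Let k ≥ 1. The smallest integer L ≥ k+1 such that every locally translation invariant probability measure on {0,1}^{k+1} extends to a translation-invariant probability measure on {0,1}^{ℤ_L} is L_0(k) = lcm{1, 2, ..., 2^k}. -/

import Mathlib

/-- Local translation invariance for a measure on `{0,1}^{k+1}`. -/
def IsLTI (k : ℕ) (μ : (Fin (k + 1) → Bool) → ℝ) : Prop :=
  ∀ η : Fin k → Bool, (∑ σ : Bool, μ (Fin.snoc η σ)) = ∑ σ : Bool, μ (Fin.cons σ η)

/-- `μ` (a measure on `{0,1}^{k+1}`) extends to a translation-invariant probability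
measure on configurations on the ring `ℤ_L` with `L` sites: the cyclic translation
is `finRotate L`, and the marginal on any `k+1` cyclically consecutive sites equals
`μ`. -/
def ExtendsToRing (k L : ℕ) (μ : (Fin (k + 1) → Bool) → ℝ) : Prop :=
  ∃ ν : (Fin L → Bool) → ℝ, (∀ x, 0 ≤ ν x) ∧ (∑ x, ν x) = 1 ∧
    (∀ x, ν (x ∘ finRotate L) = ν x) ∧
    ∀ a : Fin L, ∀ ζ : Fin (k + 1) → Bool,
      (∑ x : Fin L → Bool,
        if (∀ t : Fin (k + 1), x ((finRotate L)^[t] a) = ζ t) then ν x else 0) = μ ζ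

/-!
A simple cycle of length `p` in the de Bruijn graph `G_k` is a `p`-periodic sequence with pairwise
distinct `k`-windows in one period. If the measure of such a cycle extends to the ring of `L` sites,
then every configuration charged by the extension follows the edges of the cycle; a `k`-window of
the cycle determines its continuation, so the configuration is a translate of the cycle wrapped
around the ring, and `p ∣ L`. Since `G_k` has simple cycles of every length `1 ≤ p ≤ 2 ^ k`, this
gives `lcm {1, …, 2 ^ k} ∣ L`. Conversely, each simple cycle has at most `2 ^ k` vertices, hence
wraps around the ring as soon as this divisibility holds, and an LTI measure is a positive
combination of cycle measures: such a measure is a circulation on `G_k`, so its support contains a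
cycle, and subtracting the largest possible multiple of it removes an edge of the support.

The simple cycles come from `𝔽_{2^k}`. Let `g` generate its multiplicative group and let the linear
form `ℓ` vanish at `1, g, …, g^(k-2)` but not at `g^(k-1)`. Along a walk with steps `x ↦ g x + c`,
`c ∈ 𝔽₂`, the values of `ℓ` at `k` successive points determine the first of them, so `ℓ` carries
simple cycles of such steps to simple cycles of `G_k`. For `p < 2^k - 1` the points `g^j u`,
`j < p`, close up when `u = 1 / (1 - g^p)`; for `p = 2^k - 1` they do for every `u ≠ 0`; and for
`p = 2^k` one passes through `0` on the way from `g⁻¹` to `1`.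
-/

open Function Finset

variable {α : Type*}

/-! ### Windows and de Bruijn cycles -/

/-- The word of length `n` read from the sequence `s` starting at position `j`. -/
def window (n : ℕ) (s : ℕ → α) (j : ℕ) : Fin n → α := fun t => s (j + t)

/-- A simple closed walk of length `p` in the de Bruijn graph on words of length `k`, encoded by the
`p`-periodic sequence of letters read along it: its vertices are the windows of length `k`, and its
edges are the windows of length `k + 1`. -/
structure IsDeBruijnCycle (k p : ℕ) (s : ℕ → α) : Prop where
  pos : 0 < p
  periodic : Periodic s p
  injOn : Set.InjOn (window k s) (Set.Iio p)

theorem periodic_window {s : ℕ → α} {p : ℕ} (hs : Periodic s p) (n : ℕ) :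
    Periodic (window n s) p := fun j => by
  funext t
  rw [window, add_right_comm, hs, window]

theorem window_succ_eq_snoc (k : ℕ) (s : ℕ → α) (j : ℕ) :
    window (k + 1) s j = Fin.snoc (α := fun _ => α) (window k s j) (s (j + k)) := by
  funext t
  refine Fin.lastCases ?_ (fun i => ?_) t <;> simp [window]

theorem window_succ_eq_cons (k : ℕ) (s : ℕ → α) (j : ℕ) :
    window (k + 1) s j = Fin.cons (α := fun _ => α) (s j) (window k s (j + 1)) := by
  funext t
  refine Fin.cases ?_ (fun i => ?_) t <;> simp [window, add_assoc, add_comm 1]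

theorem window_eq_of_tail_eq_init {k : ℕ} {E : ℕ → Fin (k + 1) → α}
    (hE : ∀ j, Fin.tail (E j) = Fin.init (E (j + 1))) (j : ℕ) :
    window (k + 1) (fun i => E i 0) j = E j := by
  have shift (t : ℕ) (ht : t < k + 1) (j : ℕ) : E (j + t) 0 = E j ⟨t, ht⟩ := by
    induction t generalizing j with
    | zero => rfl
    | succ t ih =>
      rw [← add_assoc, add_right_comm, ih (by lia)]
      exact (congrFun (hE j) ⟨t, by lia⟩).symm
  exact funext fun t => shift t t.2 j

namespace IsDeBruijnCycle

variable {k p : ℕ} {s : ℕ → α}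

theorem modEq_of_window_eq (h : IsDeBruijnCycle k p s) {i j : ℕ}
    (hij : window k s i = window k s j) : i ≡ j [MOD p] := by
  refine h.injOn (Nat.mod_lt i h.pos) (Nat.mod_lt j h.pos) ?_
  rwa [(periodic_window h.periodic k).map_mod_nat, (periodic_window h.periodic k).map_mod_nat]

theorem window_eq_of_modEq (h : IsDeBruijnCycle k p s) {i j : ℕ} (hij : i ≡ j [MOD p]) (n : ℕ) :
    window n s i = window n s j := by
  have hper := periodic_window h.periodic n
  rw [← hper.map_mod_nat i, hij, hper.map_mod_nat]

theorem length_le [Fintype α] (h : IsDeBruijnCycle k p s) : p ≤ Fintype.card α ^ k := by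
  have hinj : Injective fun i : Fin p => window k s i :=
    fun i j hij => Fin.ext (h.injOn i.2 j.2 hij)
  simpa using Fintype.card_le_of_injective _ hinj

theorem comp_injective {β : Type*} (h : IsDeBruijnCycle k p s) {f : α → β} (hf : Injective f) :
    IsDeBruijnCycle k p (f ∘ s) where
  pos := h.pos
  periodic := h.periodic.comp f
  injOn _ hi _ hj hij := h.injOn hi hj (hf.comp_left hij)

theorem eq_translate_of_window_mem_range (h : IsDeBruijnCycle k p s) {y : ℕ → α}
    (hy : ∀ j, window (k + 1) y j ∈ Set.range (window (k + 1) s)) :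
    ∃ i, ∀ j, window k y j = window k s (i + j) := by
  have follow {i j : ℕ} (hij : window k y j = window k s i) :
      window (k + 1) y j = window (k + 1) s i := by
    obtain ⟨i', hi'⟩ := hy j
    have hvertex : window k s i' = window k s i := by
      rw [window_succ_eq_snoc, window_succ_eq_snoc, Fin.snoc_inj] at hi'
      exact hi'.1.trans hij
    rw [← hi', h.window_eq_of_modEq (h.modEq_of_window_eq hvertex)]
  obtain ⟨i, hi⟩ := hy 0
  refine ⟨i, fun j => ?_⟩
  induction j with
  | zero =>
    rw [window_succ_eq_snoc, window_succ_eq_snoc, Fin.snoc_inj] at hi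
    exact hi.1.symm
  | succ j ih =>
    have hedge := follow ih
    rw [window_succ_eq_cons, window_succ_eq_cons, Fin.cons_inj] at hedge
    exact hedge.2

theorem dvd_of_window_mem_range (h : IsDeBruijnCycle k p s) {y : ℕ → α} {L : ℕ}
    (hper : Periodic y L) (hy : ∀ j, window (k + 1) y j ∈ Set.range (window (k + 1) s)) :
    p ∣ L := by
  obtain ⟨i, hi⟩ := h.eq_translate_of_window_mem_range hy
  have hreturn : window k s (i + L) = window k s (i + 0) := by
    rw [← hi, ← hi, ← zero_add L, periodic_window hper]
  exact (Nat.modEq_zero_iff_dvd).1 ((h.modEq_of_window_eq hreturn).add_left_cancel' i)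

end IsDeBruijnCycle

theorem periodicPts_nonempty [Finite α] [Nonempty α] (f : α → α) : (periodicPts f).Nonempty := by
  obtain ⟨x⟩ := ‹Nonempty α›
  obtain ⟨m, n, hne, heq⟩ := Finite.exists_ne_map_eq_of_infinite fun n : ℕ => f^[n] x
  wlog hlt : m < n generalizing m n
  · exact this n m hne.symm heq.symm (by lia)
  refine ⟨f^[m] x, n - m, by lia, ?_⟩
  rw [IsPeriodicPt, IsFixedPt, ← iterate_add_apply, Nat.sub_add_cancel hlt.le]
  exact heq.symm

theorem exists_isDeBruijnCycle_of_forall_snoc_mem [Finite α] {k : ℕ} {S : Set (Fin (k + 1) → α)}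
    (hne : S.Nonempty) (hS : ∀ ζ ∈ S, ∃ a, Fin.snoc (α := fun _ => α) (Fin.tail ζ) a ∈ S) :
    ∃ p s, IsDeBruijnCycle k p s ∧ ∀ j, window (k + 1) s j ∈ S := by
  let V := {η : Fin k → α // ∃ a, Fin.snoc (α := fun _ => α) η a ∈ S}
  choose c hc using fun η : V => η.2
  let edge (η : V) : Fin (k + 1) → α := Fin.snoc (α := fun _ => α) η.1 (c η)
  let next (η : V) : V := ⟨Fin.tail (edge η), hS _ (hc η)⟩
  obtain ⟨ζ, hζ⟩ := hne
  have : Nonempty V := ⟨⟨Fin.init ζ, ζ (Fin.last k), by rwa [Fin.snoc_init_self]⟩⟩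
  obtain ⟨η, hη⟩ := periodicPts_nonempty next
  let s (j : ℕ) : α := edge (next^[j] η) 0
  have hedge (j : ℕ) : window (k + 1) s j = edge (next^[j] η) :=
    window_eq_of_tail_eq_init (E := fun j => edge (next^[j] η))
      (fun j => by simp only [iterate_succ_apply', edge, next, Fin.init_snoc]) j
  have hvertex (j : ℕ) : window k s j = (next^[j] η).1 := by
    have := hedge j
    rw [window_succ_eq_snoc, Fin.snoc_inj] at this
    exact this.1
  refine ⟨minimalPeriod next η, s, ⟨minimalPeriod_pos_of_mem_periodicPts hη, fun j => ?_, ?_⟩,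
    fun j => hedge j ▸ hc _⟩
  · simp only [s, iterate_add_minimalPeriod_eq]
  · intro i hi j hj hij
    rw [hvertex, hvertex] at hij
    exact iterate_injOn_Iio_minimalPeriod hi hj (Subtype.ext hij)

/-! ### Counting windows along one period -/

theorem sum_range_add_of_periodic {M : Type*} [AddCommMonoid M] [IsCancelAdd M] {f : ℕ → M} {p : ℕ}
    (hf : Periodic f p) (a : ℕ) : ∑ j ∈ range p, f (j + a) = ∑ j ∈ range p, f j := by
  have h : ∑ j ∈ range a, f j + ∑ j ∈ range p, f (a + j) =
      ∑ j ∈ range a, f (p + j) + ∑ j ∈ range p, f j := by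
    rw [← sum_range_add, add_comm (∑ j ∈ range a, _), ← sum_range_add, add_comm]
  simpa only [add_comm p, hf _, add_right_inj, add_comm a] using h

section windowCount

variable [DecidableEq α]

/-- The number of occurrences of each word of length `n` in the first `p` positions of the sequence
`s`. For a `p`-periodic `s` this is `p` times the empirical measure of the cycle; it serves both as
the measure on `{0,1}^{k+1}` attached to a cycle and, for `n = L`, as its extension to the ring. -/
def windowCount (n : ℕ) (s : ℕ → α) (p : ℕ) (ζ : Fin n → α) : ℝ :=
  ∑ j ∈ range p, if window n s j = ζ then 1 else 0

theorem windowCount_nonneg (n : ℕ) (s : ℕ → α) (p : ℕ) (ζ : Fin n → α) :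
    0 ≤ windowCount n s p ζ :=
  sum_nonneg fun _ _ => by positivity

theorem sum_windowCount_mul [Fintype α] (n : ℕ) (s : ℕ → α) (p : ℕ) (f : (Fin n → α) → ℝ) :
    ∑ ζ, windowCount n s p ζ * f ζ = ∑ j ∈ range p, f (window n s j) := by
  simp only [windowCount, sum_mul, ite_mul, one_mul, zero_mul]
  rw [sum_comm]
  simp

theorem sum_windowCount [Fintype α] (n : ℕ) (s : ℕ → α) (p : ℕ) :
    ∑ ζ, windowCount n s p ζ = p := by
  simpa using sum_windowCount_mul n s p 1

theorem sum_windowCount_snoc [Fintype α] (k : ℕ) (s : ℕ → α) (p : ℕ) (η : Fin k → α) :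
    ∑ a, windowCount (k + 1) s p (Fin.snoc η a) = windowCount k s p η := by
  simp only [windowCount]
  rw [sum_comm]
  simp [window_succ_eq_snoc, ite_and]

theorem sum_windowCount_cons [Fintype α] (k : ℕ) {s : ℕ → α} {p : ℕ} (hs : Periodic s p)
    (η : Fin k → α) : ∑ a, windowCount (k + 1) s p (Fin.cons a η) = windowCount k s p η := by
  calc ∑ a, windowCount (k + 1) s p (Fin.cons a η)
      = ∑ j ∈ range p, if window k s (j + 1) = η then 1 else 0 := by
        simp only [windowCount]
        rw [sum_comm]
        simp [window_succ_eq_cons, ite_and]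
    _ = windowCount k s p η :=
        sum_range_add_of_periodic ((periodic_window hs k).comp fun ξ => if ξ = η then 1 else 0) 1

theorem IsDeBruijnCycle.windowCount_eq_indicator {k p : ℕ} {s : ℕ → α}
    (h : IsDeBruijnCycle k p s) :
    windowCount (k + 1) s p = Set.indicator (Set.range (window (k + 1) s)) 1 := by
  funext ζ
  by_cases hζ : ζ ∈ Set.range (window (k + 1) s)
  · obtain ⟨j, rfl⟩ := hζ
    have hiff : ∀ i ∈ range p, window (k + 1) s i = window (k + 1) s j ↔ i = j % p := by
      intro i hi
      refine ⟨fun hij => ?_, ?_⟩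
      · rw [window_succ_eq_snoc, window_succ_eq_snoc, Fin.snoc_inj] at hij
        exact (Nat.mod_eq_of_lt (mem_range.1 hi)).symm.trans (h.modEq_of_window_eq hij.1)
      · rintro rfl
        exact (periodic_window h.periodic _).map_mod_nat j
    rw [Set.indicator_of_mem (Set.mem_range_self j), windowCount,
      sum_congr rfl fun i hi => if_congr (hiff i hi) rfl rfl]
    simp [Nat.mod_lt j h.pos]
  · rw [Set.indicator_of_notMem hζ]
    exact sum_eq_zero fun j _ => if_neg fun hj => hζ ⟨j, hj⟩

end windowCount

/-! ### Decomposition of LTI measures into cycles -/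

theorem isLTI_windowCount (k : ℕ) {s : ℕ → Bool} {p : ℕ} (hs : Periodic s p) :
    IsLTI k (windowCount (k + 1) s p) := fun η => by
  rw [sum_windowCount_snoc, sum_windowCount_cons k hs]

namespace IsLTI

variable {k : ℕ} {μ μ' : (Fin (k + 1) → Bool) → ℝ}

theorem smul (hμ : IsLTI k μ) (c : ℝ) : IsLTI k (c • μ) := fun η => by
  simp only [Pi.smul_apply, ← smul_sum, hμ η]

theorem sub (hμ : IsLTI k μ) (hμ' : IsLTI k μ') : IsLTI k (μ - μ') := fun η => by
  simp only [Pi.sub_apply, sum_sub_distrib, hμ η, hμ' η]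

theorem exists_snoc_pos (hμ : IsLTI k μ) (h0 : 0 ≤ μ) {ζ : Fin (k + 1) → Bool} (hζ : 0 < μ ζ) :
    ∃ a, 0 < μ (Fin.snoc (α := fun _ => Bool) (Fin.tail ζ) a) := by
  have hin : 0 < ∑ a, μ (Fin.cons a (Fin.tail ζ)) :=
    sum_pos' (fun _ _ => h0 _) ⟨ζ 0, mem_univ _, by rwa [Fin.cons_self_tail]⟩
  rw [← hμ] at hin
  by_contra! hout
  exact (sum_nonpos fun a _ => hout a).not_gt hin

theorem exists_smul_windowCount_le (hμ : IsLTI k μ) (h0 : 0 ≤ μ) (hne : μ ≠ 0) :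
    ∃ p s, IsDeBruijnCycle k p s ∧ ∃ c : ℝ, 0 < c ∧ c • windowCount (k + 1) s p ≤ μ ∧
      ∃ ζ, 0 < μ ζ ∧ (μ - c • windowCount (k + 1) s p) ζ = 0 := by
  obtain ⟨ζ₀, hζ₀⟩ : ∃ ζ, 0 < μ ζ := by
    obtain ⟨ζ, hζ⟩ := Function.ne_iff.1 hne
    exact ⟨ζ, (h0 ζ).lt_of_ne' hζ⟩
  obtain ⟨p, s, hcyc, hpos⟩ := exists_isDeBruijnCycle_of_forall_snoc_mem
    (S := {ζ | 0 < μ ζ}) ⟨ζ₀, hζ₀⟩ fun _ hζ => hμ.exists_snoc_pos h0 hζ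
  obtain ⟨-, ⟨i, rfl⟩, hmin⟩ := Set.exists_min_image (Set.range (window (k + 1) s)) μ
    (Set.toFinite _) (Set.range_nonempty _)
  refine ⟨p, s, hcyc, μ (window (k + 1) s i), hpos i, ?_, window (k + 1) s i, hpos i, ?_⟩
  · intro ζ
    by_cases hζ : ζ ∈ Set.range (window (k + 1) s)
    · simpa [hcyc.windowCount_eq_indicator, Set.indicator_of_mem hζ] using hmin ζ hζ
    · simpa [hcyc.windowCount_eq_indicator, Set.indicator_of_notMem hζ] using h0 ζ
  · simp [hcyc.windowCount_eq_indicator]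

theorem mem_hull_windowCount (hμ : IsLTI k μ) (h0 : 0 ≤ μ) :
    μ ∈ PointedCone.hull ℝ
      {ρ | ∃ p s, IsDeBruijnCycle k p s ∧ ρ = windowCount (k + 1) s p} := by
  induction hn : #{ζ | 0 < μ ζ} using Nat.strong_induction_on generalizing μ with
  | _ n ih =>
  obtain rfl | hne := eq_or_ne μ 0
  · exact zero_mem _
  obtain ⟨p, s, hcyc, c, hc, hle, ζ, hζ, hζ'⟩ := hμ.exists_smul_windowCount_le h0 hne
  set ρ := windowCount (k + 1) s p
  have hρ : 0 ≤ ρ := windowCount_nonneg _ s p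
  have hcard : #{ζ | 0 < (μ - c • ρ) ζ} < n := by
    rw [← hn]
    refine card_lt_card ((ssubset_iff_of_subset fun ξ hξ => ?_).2 ⟨ζ, by simpa, ?_⟩)
    · rw [mem_filter_univ] at hξ ⊢
      exact hξ.trans_le (sub_le_self μ (smul_nonneg hc.le hρ) ξ)
    · simp only [mem_filter_univ, hζ', lt_irrefl, not_false_eq_true]
  rw [← sub_add_cancel μ (c • ρ)]
  exact add_mem (ih _ hcard (hμ.sub ((isLTI_windowCount k hcyc.periodic).smul c))
    (sub_nonneg.2 hle) rfl)
    (PointedCone.smul_mem _ hc.le (PointedCone.subset_hull ⟨p, s, hcyc, rfl⟩))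

end IsLTI

/-! ### Configurations on the ring -/

theorem val_finRotate_iterate {L : ℕ} (t : ℕ) (a : Fin L) :
    ((finRotate L)^[t] a : ℕ) = (a + t) % L := by
  obtain ⟨n, rfl⟩ := Nat.exists_eq_succ_of_ne_zero a.neZero.ne
  induction t with
  | zero => simp [Nat.mod_eq_of_lt a.2]
  | succ t ih => rw [iterate_succ_apply', finRotate_apply, Fin.val_add, ih, Fin.val_one',
      ← Nat.add_mod, add_assoc]

/-- The sequence of letters read when travelling around the ring from the site `a`. -/
def unroll {L : ℕ} (x : Fin L → α) (a : Fin L) : ℕ → α := fun t => x ((finRotate L)^[t] a)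

theorem periodic_unroll {L : ℕ} (x : Fin L → α) (a : Fin L) : Periodic (unroll x a) L := fun t => by
  have hL : (finRotate L)^[L] a = a := Fin.ext <| by
    rw [val_finRotate_iterate, Nat.add_mod_right, Nat.mod_eq_of_lt a.2]
  rw [unroll, iterate_add_apply, hL, unroll]

theorem window_unroll {L : ℕ} (x : Fin L → α) (a : Fin L) (n j : ℕ) :
    window n (unroll x a) j = fun t : Fin n => x ((finRotate L)^[t] ((finRotate L)^[j] a)) := by
  funext t
  rw [window, unroll, add_comm, iterate_add_apply]

theorem window_finRotate_iterate {s : ℕ → α} {L : ℕ} (hs : Periodic s L) (j t : ℕ) (a : Fin L) :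
    window L s j ((finRotate L)^[t] a) = s (j + a + t) := by
  have hshift : Periodic (fun i => s (j + i)) L := fun i => by simp only [← add_assoc, hs _]
  rw [window, val_finRotate_iterate, hshift.map_mod_nat, add_assoc]

theorem window_comp_finRotate {s : ℕ → α} {L : ℕ} (hs : Periodic s L) (j : ℕ) :
    window L s j ∘ finRotate L = window L s (j + 1) := by
  funext a
  rw [comp_apply, ← iterate_one (finRotate L), window_finRotate_iterate hs, window, add_right_comm]

section extendableCone

variable [Fintype α] [DecidableEq α]

variable (α) in
/-- The cone of nonnegative functions on words of length `n` that are the marginals, at every `n`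
consecutive sites, of some translation-invariant nonnegative function on the configurations of the
ring: the condition of `ExtendsToRing` without the normalisation of the total mass. -/
def extendableCone (n L : ℕ) : PointedCone ℝ ((Fin n → α) → ℝ) where
  carrier := {μ | ∃ ν : (Fin L → α) → ℝ, (∀ x, 0 ≤ ν x) ∧ (∀ x, ν (x ∘ finRotate L) = ν x) ∧
    ∀ a ζ, (∑ x, if ∀ t : Fin n, x ((finRotate L)^[t] a) = ζ t then ν x else 0) = μ ζ}
  zero_mem' := ⟨0, by simp, by simp, by simp⟩
  add_mem' := by
    rintro _ _ ⟨ν, hν0, hν, hνμ⟩ ⟨ν', hν'0, hν', hν'μ⟩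
    refine ⟨ν + ν', fun x => add_nonneg (hν0 x) (hν'0 x), fun x => ?_, fun a ζ => ?_⟩
    · simp only [Pi.add_apply, hν, hν']
    · simp only [Pi.add_apply, ← hνμ a, ← hν'μ a, ← sum_add_distrib, ite_add_zero]
  smul_mem' := by
    rintro c _ ⟨ν, hν0, hν, hνμ⟩
    refine ⟨c • ν, fun x => smul_nonneg c.2 (hν0 x), fun x => ?_, fun a ζ => ?_⟩
    · simp only [Pi.smul_apply, hν]
    · simp only [Pi.smul_apply, ← hνμ a, smul_sum, smul_ite, smul_zero]

theorem windowCount_mem_extendableCone {s : ℕ → α} {p : ℕ} (hs : Periodic s p) {L : ℕ}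
    (hL : p ∣ L) (n : ℕ) : windowCount n s p ∈ extendableCone α n L := by
  have hsL : Periodic s L := by
    obtain ⟨m, rfl⟩ := hL
    simpa [mul_comm] using hs.nat_mul m
  refine ⟨windowCount L s p, windowCount_nonneg L s p, fun x => ?_, fun a ζ => ?_⟩
  · have hrot (j : ℕ) : window L s (j + 1) = x ∘ finRotate L ↔ window L s j = x := by
      rw [← window_comp_finRotate hsL, (finRotate L).surjective.injective_comp_right.eq_iff]
    simp only [windowCount, ← hrot]
    exact (sum_range_add_of_periodic ((periodic_window hs L).comp fun ξ =>
      if ξ = x ∘ finRotate L then (1 : ℝ) else 0) 1).symm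
  · have hwin (j : ℕ) : (∀ t : Fin n, window L s j ((finRotate L)^[t] a) = ζ t) ↔
        window n s (j + a) = ζ := by
      rw [funext_iff]
      exact forall_congr' fun t => by rw [window_finRotate_iterate hsL, window]
    calc (∑ x, if ∀ t : Fin n, x ((finRotate L)^[t] a) = ζ t then windowCount L s p x else 0)
        = ∑ x, windowCount L s p x *
            if ∀ t : Fin n, x ((finRotate L)^[t] a) = ζ t then 1 else 0 := by
          simp only [mul_ite, mul_one, mul_zero]
      _ = ∑ j ∈ range p, if window n s (j + a) = ζ then 1 else 0 := by
          rw [sum_windowCount_mul]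
          simp only [hwin]
      _ = windowCount n s p ζ :=
          sum_range_add_of_periodic ((periodic_window hs n).comp fun ξ => if ξ = ζ then 1 else 0) a

end extendableCone

theorem extendsToRing_of_mem_extendableCone {k L : ℕ} [NeZero L] {μ : (Fin (k + 1) → Bool) → ℝ}
    (h1 : ∑ ζ, μ ζ = 1) (hμ : μ ∈ extendableCone Bool (k + 1) L) : ExtendsToRing k L μ := by
  obtain ⟨ν, hν0, hν, hνμ⟩ := hμ
  refine ⟨ν, hν0, ?_, hν, hνμ⟩
  simp only [← h1, ← hνμ 0]
  rw [sum_comm]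
  simp [← funext_iff]

theorem IsLTI.extendsToRing {k L : ℕ} [NeZero L] (hL : (Icc 1 (2 ^ k)).lcm id ∣ L)
    {μ : (Fin (k + 1) → Bool) → ℝ} (hμ : IsLTI k μ) (h0 : 0 ≤ μ) (h1 : ∑ ζ, μ ζ = 1) :
    ExtendsToRing k L μ := by
  refine extendsToRing_of_mem_extendableCone h1
    (Submodule.span_le.2 ?_ (hμ.mem_hull_windowCount h0))
  rintro _ ⟨p, s, hcyc, rfl⟩
  have hp : p ∈ Icc 1 (2 ^ k) := mem_Icc.2 ⟨hcyc.pos, hcyc.length_le⟩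
  exact windowCount_mem_extendableCone hcyc.periodic ((dvd_lcm (f := id) hp).trans hL) (k + 1)

theorem IsDeBruijnCycle.dvd_of_extendsToRing {k p L : ℕ} [NeZero L] {s : ℕ → Bool}
    (h : IsDeBruijnCycle k p s) {μ : (Fin (k + 1) → Bool) → ℝ}
    (hμ : support μ ⊆ Set.range (window (k + 1) s)) (hext : ExtendsToRing k L μ) : p ∣ L := by
  obtain ⟨ν, hν0, hν1, -, hνμ⟩ := hext
  obtain ⟨x, -, hx⟩ := exists_lt_of_sum_lt
    (by simp [hν1] : ∑ _x : Fin L → Bool, (0 : ℝ) < ∑ x, ν x)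
  refine h.dvd_of_window_mem_range (periodic_unroll x 0) fun j => hμ (ne_of_gt ?_)
  rw [window_unroll, ← hνμ ((finRotate L)^[j] 0)]
  refine sum_pos' (fun y _ => ?_) ⟨x, mem_univ x, by simpa using hx⟩
  split_ifs
  exacts [hν0 y, le_rfl]

/-! ### De Bruijn graphs over finite fields are pancyclic -/

theorem exists_periodic_of_closed_walk {R : α → α → Prop} {m : ℕ} {w : ℕ → α}
    (hinj : Set.InjOn w (Set.Iio (m + 1))) (hstep : ∀ j < m, R (w j) (w (j + 1)))
    (hlast : R (w m) (w 0)) :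
    ∃ v : ℕ → α, Periodic v (m + 1) ∧ Set.InjOn v (Set.Iio (m + 1)) ∧
      ∀ j, R (v j) (v (j + 1)) := by
  refine ⟨fun j => w (j % (m + 1)), fun j => by simp, hinj.congr fun i hi => ?_, fun j => ?_⟩
  · rw [Nat.mod_eq_of_lt hi]
  · beta_reduce
    rw [← Nat.mod_add_mod j]
    obtain hlt | heq := (Nat.lt_succ_iff.1 (Nat.mod_lt j m.succ_pos)).lt_or_eq
    · rw [Nat.mod_eq_of_lt (Nat.succ_lt_succ hlt)]
      exact hstep _ hlt
    · rwa [heq, Nat.mod_self]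

section AffineCycle

variable {F : Type*} [Field F] {g : F}

theorem exists_affine_cycle_of_eq_pow_mul_add {m : ℕ} (hm : m < orderOf g) {u : F} (hu : u ≠ 0)
    {c : ℤ} (hc : u = g ^ (m + 1) * u + c) :
    ∃ v : ℕ → F, Periodic v (m + 1) ∧ Set.InjOn v (Set.Iio (m + 1)) ∧
      ∀ j, ∃ c : ℤ, v (j + 1) = g * v j + c := by
  refine exists_periodic_of_closed_walk (R := fun x y => ∃ c : ℤ, y = g * x + c)
    (w := fun j => g ^ j * u) ?_ (fun j _ => ⟨0, by simp [pow_succ', mul_assoc]⟩)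
    ⟨c, by rwa [pow_zero, one_mul, ← mul_assoc, ← pow_succ']⟩
  exact (mul_left_injective₀ hu).comp_injOn
    (pow_injOn_Iio_orderOf.mono (Set.Iio_subset_Iio hm))

theorem exists_affine_cycle_through_zero (hg : 0 < orderOf g) :
    ∃ v : ℕ → F, Periodic v (orderOf g + 1) ∧ Set.InjOn v (Set.Iio (orderOf g + 1)) ∧
      ∀ j, ∃ c : ℤ, v (j + 1) = g * v j + c := by
  have hg0 : g ≠ 0 := by
    rintro rfl
    simp at hg
  let w : ℕ → F
    | 0 => 0
    | j + 1 => g ^ j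
  refine exists_periodic_of_closed_walk (R := fun x y => ∃ c : ℤ, y = g * x + c) (w := w) ?_ ?_ ?_
  · rintro (_ | i) hi (_ | j) hj hij
    · rfl
    · exact absurd hij.symm (pow_ne_zero j hg0)
    · exact absurd hij (pow_ne_zero i hg0)
    · exact congrArg _ (pow_injOn_Iio_orderOf (Nat.lt_of_succ_lt_succ hi)
        (Nat.lt_of_succ_lt_succ hj) hij)
  · rintro (_ | j) -
    · exact ⟨1, by simp [w]⟩
    · exact ⟨0, by simp [w, pow_succ']⟩
  · obtain ⟨n, hn⟩ := Nat.exists_eq_succ_of_ne_zero hg.ne'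
    refine ⟨-1, ?_⟩
    have hone : g * g ^ n = 1 := by
      rw [← pow_succ', ← Nat.succ_eq_add_one, ← hn, pow_orderOf_eq_one]
    simp [hn, w, hone]

theorem exists_affine_cycle [Finite F] (hg : orderOf g = Nat.card F - 1) {p : ℕ} (hp : 0 < p)
    (hp' : p ≤ Nat.card F) :
    ∃ v : ℕ → F, Periodic v p ∧ Set.InjOn v (Set.Iio p) ∧
      ∀ j, ∃ c : ℤ, v (j + 1) = g * v j + c := by
  have hcard : 1 < Nat.card F := Finite.one_lt_card
  obtain ⟨m, rfl⟩ := Nat.exists_eq_succ_of_ne_zero hp.ne'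
  obtain hlt | heq | rfl : m + 1 < orderOf g ∨ m + 1 = orderOf g ∨ m = orderOf g := by lia
  · have hne : 1 - g ^ (m + 1) ≠ 0 :=
      sub_ne_zero.2 (pow_ne_one_of_lt_orderOf m.succ_ne_zero hlt).symm
    refine exists_affine_cycle_of_eq_pow_mul_add (by lia) (inv_ne_zero hne) (c := 1) ?_
    field_simp
    push_cast
    ring
  · refine exists_affine_cycle_of_eq_pow_mul_add (by lia) one_ne_zero (c := 0) ?_
    simp [heq, pow_orderOf_eq_one]
  · exact exists_affine_cycle_through_zero (by lia)

end AffineCycle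

section topCoord

variable {K F : Type*} [Field K] [Field F] [Algebra K F] (pb : PowerBasis K F)

/-- The coefficient of the highest power of the generator in a power basis. Applied to the orbit of
a map `x ↦ pb.gen * x + c`, it yields the output sequence of a linear feedback shift register. -/
noncomputable def topCoord : F →ₗ[K] K :=
  pb.basis.coord ⟨pb.dim - 1, Nat.sub_lt pb.dim_pos one_pos⟩

theorem topCoord_gen_pow {i : ℕ} (hi : i < pb.dim) :
    topCoord pb (pb.gen ^ i) = if i + 1 = pb.dim then 1 else 0 := by
  have := pb.dim_pos
  rw [topCoord, ← pb.basis_eq_pow ⟨i, hi⟩, Module.Basis.coord_apply, Module.Basis.repr_self,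
    Finsupp.single_apply]
  exact if_congr (by rw [Fin.mk.injEq]; lia) rfl rfl

theorem eq_zero_of_topCoord_gen_pow_mul_eq_zero {x : F}
    (hx : ∀ i < pb.dim, topCoord pb (pb.gen ^ i * x) = 0) : x = 0 := by
  have hzero : topCoord pb ∘ₗ LinearMap.mulRight K x = 0 :=
    pb.basis.ext fun i => by simpa using hx i i.2
  have htop : topCoord pb (pb.gen ^ (pb.dim - 1)) = 1 := by
    rw [topCoord_gen_pow pb (Nat.sub_lt pb.dim_pos one_pos), if_pos]
    exact Nat.sub_add_cancel pb.dim_pos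
  by_contra hne
  have h : topCoord pb (pb.gen ^ (pb.dim - 1) * x⁻¹ * x) = 0 := LinearMap.congr_fun hzero _
  rw [inv_mul_cancel_right₀ hne, htop] at h
  exact one_ne_zero h

variable {pb} {w : ℕ → F}

theorem topCoord_gen_pow_mul_affine_walk (hw : ∀ j, ∃ c : ℤ, w (j + 1) = pb.gen * w j + c)
    {i t : ℕ} (hit : i + t < pb.dim) (j : ℕ) :
    topCoord pb (pb.gen ^ i * w (j + t)) = topCoord pb (pb.gen ^ (i + t) * w j) := by
  induction t generalizing i with
  | zero => rfl
  | succ t ih =>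
    obtain ⟨c, hc⟩ := hw (j + t)
    have hconst : topCoord pb (pb.gen ^ i * c) = 0 := by
      rw [mul_comm, ← zsmul_eq_mul, map_zsmul, topCoord_gen_pow pb (by lia), if_neg (by lia),
        smul_zero]
    rw [← add_assoc, hc, mul_add, map_add, hconst, add_zero, ← mul_assoc, ← pow_succ,
      ih (by lia)]
    congr 3
    lia

theorem isDeBruijnCycle_topCoord (hw : ∀ j, ∃ c : ℤ, w (j + 1) = pb.gen * w j + c) {p : ℕ}
    (hp : 0 < p) (hper : Periodic w p) (hinj : Set.InjOn w (Set.Iio p)) :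
    IsDeBruijnCycle pb.dim p (topCoord pb ∘ w) where
  pos := hp
  periodic := hper.comp _
  injOn i hi j hj hij := by
    refine hinj hi hj (sub_eq_zero.1 (eq_zero_of_topCoord_gen_pow_mul_eq_zero pb fun t ht => ?_))
    have hwindow (l : ℕ) : topCoord pb (pb.gen ^ t * w l) = topCoord pb (w (l + t)) := by
      simpa using (topCoord_gen_pow_mul_affine_walk hw (i := 0) (by simpa using ht) l).symm
    rw [mul_sub, map_sub, hwindow, hwindow, sub_eq_zero]
    exact congrFun hij ⟨t, ht⟩

end topCoord

theorem exists_powerBasis_orderOf_gen (K F : Type*) [Field K] [Field F] [Algebra K F] [Finite F] :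
    ∃ pb : PowerBasis K F, orderOf pb.gen = Nat.card F - 1 := by
  obtain ⟨g, hg⟩ := IsCyclic.exists_generator (α := Fˣ)
  have htop : Algebra.adjoin K {(g : F)} = ⊤ := by
    refine eq_top_iff.2 fun y _ => ?_
    obtain rfl | hy := eq_or_ne y 0
    · exact zero_mem _
    obtain ⟨n, hn : g ^ n = Units.mk0 y hy⟩ := (mem_powers_iff_mem_zpowers).2 (hg (Units.mk0 y hy))
    have hy' : (g : F) ^ n = y := by rw [← Units.val_pow_eq_pow_val, hn, Units.val_mk0]
    exact hy' ▸ pow_mem (Algebra.self_mem_adjoin_singleton K (g : F)) n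
  refine ⟨PowerBasis.ofAdjoinEqTop (Algebra.IsIntegral.isIntegral (g : F)) htop, ?_⟩
  rw [PowerBasis.ofAdjoinEqTop_gen, orderOf_units, orderOf_eq_card_of_forall_mem_zpowers hg,
    Nat.card_units]

theorem exists_isDeBruijnCycle_of_finite_field (K : Type*) [Field K] [Finite K] {k p : ℕ}
    (hk : k ≠ 0) (hp : 0 < p) (hp' : p ≤ Nat.card K ^ k) : ∃ s : ℕ → K, IsDeBruijnCycle k p s := by
  have : NeZero k := ⟨hk⟩
  let q := ringChar K
  have : Fact q.Prime := ⟨CharP.char_is_prime K q⟩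
  let F := FiniteField.Extension K q k
  obtain ⟨pb, hgen⟩ := exists_powerBasis_orderOf_gen K F
  obtain ⟨w, hper, hinj, hw⟩ := exists_affine_cycle hgen hp
    (hp'.trans_eq (FiniteField.natCard_extension K q k).symm)
  have hdim : pb.dim = k := pb.finrank.symm.trans (FiniteField.finrank_extension K q k)
  exact ⟨_, hdim ▸ isDeBruijnCycle_topCoord hw hp hper hinj⟩

theorem exists_isDeBruijnCycle_bool {k p : ℕ} (hk : k ≠ 0) (hp : 0 < p) (hp' : p ≤ 2 ^ k) :
    ∃ s : ℕ → Bool, IsDeBruijnCycle k p s := by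
  obtain ⟨s, hs⟩ := exists_isDeBruijnCycle_of_finite_field (ZMod 2) hk hp (by simpa using hp')
  exact ⟨_, hs.comp_injective finTwoEquiv.injective⟩

/-! ### Divisibility by the cycle lengths -/

theorem forall_isLTI_extendsToRing_iff {k : ℕ} (hk : k ≠ 0) (L : ℕ) [NeZero L] :
    (∀ μ : (Fin (k + 1) → Bool) → ℝ, (∀ η, 0 ≤ μ η) → ∑ η, μ η = 1 → IsLTI k μ →
      ExtendsToRing k L μ) ↔ (Icc 1 (2 ^ k)).lcm id ∣ L := by
  refine ⟨fun H => Finset.lcm_dvd fun p hp => ?_, fun hL μ h0 h1 hμ => hμ.extendsToRing hL h0 h1⟩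
  obtain ⟨hp0, hp'⟩ := mem_Icc.1 hp
  obtain ⟨s, hs⟩ := exists_isDeBruijnCycle_bool hk hp0 hp'
  have hpR : (p : ℝ) ≠ 0 := Nat.cast_ne_zero.2 hs.pos.ne'
  refine hs.dvd_of_extendsToRing (μ := (p : ℝ)⁻¹ • windowCount (k + 1) s p) ?_ (H _ ?_ ?_ ?_)
  · rw [hs.windowCount_eq_indicator]
    exact (support_const_smul_subset _ _).trans Set.support_indicator_subset
  · exact fun ζ => mul_nonneg (by positivity) (windowCount_nonneg (k + 1) s p ζ)
  · simp only [Pi.smul_apply, smul_eq_mul, ← mul_sum, sum_windowCount, inv_mul_cancel₀ hpR]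
  · exact (isLTI_windowCount k hs.periodic).smul _

/-- The least `L ≥ k+1` such that every LTI probability measure on `{0,1}^{k+1}`
extends to a TI measure on the ring `ℤ_L` is `lcm {1, 2, ..., 2^k}`. -/
theorem stmt15 (k : ℕ) (hk : 1 ≤ k) :
    IsLeast {L : ℕ | k + 1 ≤ L ∧
        ∀ μ : (Fin (k + 1) → Bool) → ℝ,
          (∀ η, 0 ≤ μ η) → (∑ η, μ η) = 1 → IsLTI k μ → ExtendsToRing k L μ}
      ((Finset.Icc 1 (2 ^ k)).lcm id) := by
  have hpos : 0 < (Icc 1 (2 ^ k)).lcm id := Nat.pos_of_ne_zero (by simp [Finset.lcm_eq_zero_iff])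
  have hle : 2 ^ k ≤ (Icc 1 (2 ^ k)).lcm id :=
    Nat.le_of_dvd hpos (dvd_lcm (f := id) (mem_Icc.2 ⟨Nat.one_le_two_pow, le_rfl⟩))
  have hiff (L : ℕ) (hL : 0 < L) :=
    have : NeZero L := ⟨hL.ne'⟩
    forall_isLTI_extendsToRing_iff (Nat.one_le_iff_ne_zero.1 hk) L
  refine ⟨⟨Nat.lt_two_pow_self.trans_le hle, (hiff _ hpos).2 dvd_rfl⟩, fun L ⟨hkL, hL⟩ => ?_⟩
  have hL0 : 0 < L := k.succ_pos.trans_le hkL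
  exact Nat.le_of_dvd hL0 ((hiff L hL0).1 hL)
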